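/- arXiv:math/0508379 — 6 statements merged into one kernel-verified Lean document; each statement's English description precedes it below -/
import Mathlib

section
/- Let L be an ideal lattice. An element a ∈ L is semi-prime if and only if a = inf V for some set V ⊆ L of prime elements. -/
open CompleteLattice TopologicalSpace

/-- An ideal lattice: a complete, compactly generated lattice with an associative
multiplication distributing over finite suprema, for which `⊤` is a compact
two-sided identity and products of compact elements are compact. -/
structure IsIdealLattice (α : Type*) [CompleteLattice α] [Mul α] : Prop where
  mul_assoc : ∀ a b c : α, a * b * c = a * (b * c)
  compactlyGenerated : ∀ a : α, a = sSup {b : α | b ≤ a ∧ IsCompactElement b}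
  mul_sup : ∀ a b c : α, a * (b ⊔ c) = a * b ⊔ a * c
  sup_mul : ∀ a b c : α, (a ⊔ b) * c = a * c ⊔ b * c
  top_compact : IsCompactElement (⊤ : α)
  top_mul : ∀ a : α, ⊤ * a = a
  mul_top : ∀ a : α, a * ⊤ = a
  compact_mul : ∀ a b : α, IsCompactElement a → IsCompactElement b → IsCompactElement (a * b)

/-- A prime element of an ideal lattice: `p ≠ ⊤` and `a * b ≤ p` implies `a ≤ p` or `b ≤ p`. -/
def IsPrimeElt {α : Type*} [CompleteLattice α] [Mul α] (p : α) : Prop :=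
  p ≠ ⊤ ∧ ∀ a b : α, a * b ≤ p → a ≤ p ∨ b ≤ p

/-- A semi-prime element of an ideal lattice: `b * b ≤ a` implies `b ≤ a`. -/
def IsSemiprimeElt {α : Type*} [CompleteLattice α] [Mul α] (a : α) : Prop :=
  ∀ b : α, b * b ≤ a → b ≤ a

namespace IsIdealLattice

variable {α : Type*} [CompleteLattice α] [Mul α]

theorem mul_le_mul (hL : IsIdealLattice α) {a b c d : α} (hab : a ≤ b) (hcd : c ≤ d) :
    a * c ≤ b * d := by
  calc a * c ≤ a * c ⊔ b * c := le_sup_left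
    _ = b * c := by rw [← hL.sup_mul, sup_eq_right.mpr hab]
    _ ≤ b * c ⊔ b * d := le_sup_left
    _ = b * d := by rw [← hL.mul_sup, sup_eq_right.mpr hcd]

theorem mul_le_left (hL : IsIdealLattice α) (a b : α) : a * b ≤ a :=
  (hL.mul_le_mul le_rfl le_top).trans_eq (hL.mul_top a)

theorem mul_le_right (hL : IsIdealLattice α) (a b : α) : a * b ≤ b :=
  (hL.mul_le_mul le_top le_rfl).trans_eq (hL.top_mul b)

theorem sup_mul_sup_le (hL : IsIdealLattice α) {p x y : α} (h : x * y ≤ p) :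
    (p ⊔ x) * (p ⊔ y) ≤ p := by
  rw [hL.sup_mul, hL.mul_sup x]
  exact sup_le (hL.mul_le_left _ _) (sup_le (hL.mul_le_right _ _) h)

theorem exists_compact_le_not_le (hL : IsIdealLattice α) {a b : α} (h : ¬ b ≤ a) :
    ∃ c ≤ b, IsCompactElement c ∧ ¬ c ≤ a := by
  by_contra! H
  refine h ?_
  rw [hL.compactlyGenerated b]
  exact sSup_le fun c hc => H c hc.1 hc.2

/-- An element `a` lying above no term of a sequence of compact elements with
`s (n + 1) = s n * s n` is contained in a prime element with the same property. -/
theorem exists_prime_avoiding_seq (hL : IsIdealLattice α) {a : α} {s : ℕ → α}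
    (hs : ∀ n, s (n + 1) = s n * s n) (hc : ∀ n, IsCompactElement (s n))
    (ha : ∀ n, ¬ s n ≤ a) : ∃ p, IsPrimeElt p ∧ a ≤ p ∧ ∀ n, ¬ s n ≤ p := by
  have anti : Antitone s := antitone_nat_of_succ_le fun n => by
    rw [hs]
    exact hL.mul_le_left _ _
  obtain ⟨p, hap, hp, hmax⟩ := zorn_le_nonempty₀ {x : α | ∀ n, ¬ s n ≤ x} (by
    intro C hC hchain y hy
    refine ⟨sSup C, fun n hn => ?_, fun z hz => le_sSup hz⟩
    obtain ⟨x, hx, hnx⟩ := hc n C (sSup C) ⟨y, hy⟩ hchain.directedOn (_root_.isLUB_sSup C) hn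
    exact hC hx n hnx) a ha
  have meets : ∀ x, ¬ x ≤ p → ∃ n, s n ≤ p ⊔ x := fun x hx => by
    by_contra! H
    exact hx (le_sup_right.trans (hmax H le_sup_left))
  refine ⟨p, ⟨fun h => hp 0 (h ▸ le_top), fun x y hxy => ?_⟩, hap, hp⟩
  by_contra! H
  obtain ⟨n, hn⟩ := meets x H.1
  obtain ⟨m, hm⟩ := meets y H.2
  refine hp (max n m + 1) ?_
  rw [hs]
  exact (hL.mul_le_mul ((anti (le_max_left n m)).trans hn)
    ((anti (le_max_right n m)).trans hm)).trans (hL.sup_mul_sup_le hxy)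

theorem exists_prime_of_not_le (hL : IsIdealLattice α) {a b : α} (ha : IsSemiprimeElt a)
    (hb : ¬ b ≤ a) : ∃ p, IsPrimeElt p ∧ a ≤ p ∧ ¬ b ≤ p := by
  obtain ⟨c, hcb, hc, hca⟩ := hL.exists_compact_le_not_le hb
  let s : ℕ → α := fun n => (fun x => x * x)^[n] c
  have hs : ∀ n, s (n + 1) = s n * s n := fun n => Function.iterate_succ_apply' _ n c
  have hcompact : ∀ n, IsCompactElement (s n) := fun n => by
    induction n with
    | zero => exact hc
    | succ n ih =>
      rw [hs]
      exact hL.compact_mul _ _ ih ih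
  have hnot : ∀ n, ¬ s n ≤ a := fun n => by
    induction n with
    | zero => exact hca
    | succ n ih =>
      rw [hs]
      exact fun h => ih (ha _ h)
  obtain ⟨p, hp, hap, hsp⟩ := hL.exists_prime_avoiding_seq hs hcompact hnot
  exact ⟨p, hp, hap, fun h => hsp 0 (hcb.trans h)⟩

end IsIdealLattice

/-- An element of an ideal lattice is semi-prime if and only if it is the infimum of a
set of prime elements. -/
theorem semiprime_iff_sInf_primes {α : Type*} [CompleteLattice α] [Mul α]
    (hL : IsIdealLattice α) (a : α) :
    IsSemiprimeElt a ↔ ∃ V : Set α, (∀ p ∈ V, IsPrimeElt p) ∧ a = sInf V := by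
  constructor
  · intro ha
    refine ⟨{p | IsPrimeElt p ∧ a ≤ p}, fun p hp => hp.1,
      le_antisymm (le_sInf fun p hp => hp.2) ?_⟩
    by_contra h
    obtain ⟨p, hp, hap, hnp⟩ := hL.exists_prime_of_not_le ha h
    exact hnp (sInf_le ⟨hp, hap⟩)
  · rintro ⟨V, hV, rfl⟩ b hb
    exact le_sInf fun p hp => or_self_iff.mp ((hV p hp).2 b b (hb.trans (sInf_le hp)))
end

section
/- Let L be an ideal lattice. The assignments a ↦ V(a) = {p ∈ Spec L : a ≤ p} and Y ↦ inf Y induce mutually inverse, order-reversing bijections between the set of semi-prime elements of L and the set of closed subsets of Spec L. Precisely: for every semi-prime a ∈ L, inf V(a) = a; and for every closed subset Y ⊆ Spec L, inf Y is semi-prime and V(inf Y) = Y. -/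
open CompleteLattice TopologicalSpace

/-- The prime spectrum of an ideal lattice: the set of prime elements. -/
def SpecL (α : Type*) [CompleteLattice α] [Mul α] : Type _ := {p : α // IsPrimeElt p}

/-- The Zariski-closed set `V(a) = {p ∈ Spec L : a ≤ p}`. -/
def zV {α : Type*} [CompleteLattice α] [Mul α] (a : α) : Set (SpecL α) := {p | a ≤ p.1}

/-- The Zariski-open set `D(a) = {p ∈ Spec L : a ≰ p}`. -/
def zD {α : Type*} [CompleteLattice α] [Mul α] (a : α) : Set (SpecL α) := {p | ¬ a ≤ p.1}

/-- The Zariski topology on `SpecL α`: the open sets are exactly the sets `zD a`. -/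
instance {α : Type*} [CompleteLattice α] [Mul α] : TopologicalSpace (SpecL α) :=
  TopologicalSpace.generateFrom {U : Set (SpecL α) | ∃ a : α, U = zD a}

namespace IsIdealLattice

variable {α : Type*} [CompleteLattice α] [Mul α]

/-- An element maximal among those lying above no term of a sequence with
`c (n + 1) = c n * c n` is prime. -/
theorem isPrimeElt_of_maximal (hL : IsIdealLattice α) {c : ℕ → α}
    (hc : ∀ n, c (n + 1) = c n * c n) {p : α} (hp : Maximal (fun q => ∀ n, ¬ c n ≤ q) p) :
    IsPrimeElt p := by
  have hanti : Antitone c := antitone_nat_of_succ_le fun n => by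
    rw [hc]
    exact hL.mul_le_left _ _
  have key : ∀ u, ¬ u ≤ p → ∃ n, c n ≤ p ⊔ u := by
    intro u hu
    by_contra! h
    exact hu (le_sup_right.trans (hp.le_of_ge h le_sup_left))
  refine ⟨fun h => hp.prop 0 (h ▸ le_top), fun u v huv => ?_⟩
  by_contra! h
  obtain ⟨m, hm⟩ := key u h.1
  obtain ⟨n, hn⟩ := key v h.2
  apply hp.prop (max m n + 1)
  calc c (max m n + 1) = c (max m n) * c (max m n) := hc _
    _ ≤ (p ⊔ u) * (p ⊔ v) :=
      hL.mul_le_mul ((hanti (le_max_left m n)).trans hm) ((hanti (le_max_right m n)).trans hn)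
    _ ≤ p := by
      rw [hL.mul_sup, hL.sup_mul p u v]
      exact sup_le (hL.mul_le_right _ _) (sup_le (hL.mul_le_left _ _) huv)

/-- A semi-prime element is separated by a prime element from any element not below it. -/
theorem exists_isPrimeElt (hL : IsIdealLattice α) {a x : α} (ha : IsSemiprimeElt a)
    (hx : ¬ x ≤ a) : ∃ p : α, IsPrimeElt p ∧ a ≤ p ∧ ¬ x ≤ p := by
  obtain ⟨y, ⟨hyx, hyc⟩, hya⟩ : ∃ y, (y ≤ x ∧ IsCompactElement y) ∧ ¬ y ≤ a := by
    by_contra! h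
    apply hx
    rw [hL.compactlyGenerated x]
    exact sSup_le h
  let c : ℕ → α := fun n => Nat.rec y (fun _ z => z * z) n
  have hcompact : ∀ n, IsCompactElement (c n) := by
    intro n
    induction n with
    | zero => exact hyc
    | succ n ih => exact hL.compact_mul _ _ ih ih
  have hca : ∀ n, ¬ c n ≤ a := by
    intro n
    induction n with
    | zero => exact hya
    | succ n ih => exact fun h => ih (ha _ h)
  obtain ⟨p, hap, hp⟩ := zorn_le_nonempty₀ {q | ∀ n, ¬ c n ≤ q} (fun S hS hchain z hz =>
    ⟨sSup S, fun n hn => by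
      obtain ⟨q, hq, hcq⟩ := (isCompactElement_iff_le_of_directed_sSup_le α (c n)).1
        (hcompact n) S ⟨z, hz⟩ hchain.directedOn hn
      exact hS hq n hcq, fun q hq => le_sSup hq⟩) a hca
  exact ⟨p, hL.isPrimeElt_of_maximal (fun _ => rfl) hp, hap, fun h => hp.prop 0 (hyx.trans h)⟩

theorem exists_eq_zD_of_isOpen (hL : IsIdealLattice α) {U : Set (SpecL α)} (hU : IsOpen U) :
    ∃ a : α, U = zD a := by
  induction hU with
  | basic s hs => exact hs
  | univ => exact ⟨⊤, (Set.eq_univ_of_forall fun p h => p.2.1 (top_le_iff.1 h)).symm⟩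
  | inter s t _ _ hs ht =>
    obtain ⟨a, rfl⟩ := hs
    obtain ⟨b, rfl⟩ := ht
    refine ⟨a * b, Set.ext fun p => ⟨fun h hab => (p.2.2 a b hab).elim h.1 h.2, fun h => ?_⟩⟩
    exact ⟨fun ha => h ((hL.mul_le_left a b).trans ha),
      fun hb => h ((hL.mul_le_right a b).trans hb)⟩
  | sUnion S _ ih =>
    choose! f hf using ih
    refine ⟨sSup (f '' S), Set.ext fun p => ?_⟩
    have hmem : ∀ s ∈ S, (p ∈ s ↔ ¬ f s ≤ p.1) := fun s hs => by
      conv_lhs => rw [hf s hs]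
      rfl
    change (∃ s ∈ S, p ∈ s) ↔ ¬ sSup (f '' S) ≤ p.1
    rw [sSup_le_iff, Set.forall_mem_image]
    push Not
    exact exists_congr fun s => and_congr_right (hmem s)

theorem exists_eq_zV_of_isClosed (hL : IsIdealLattice α) {Y : Set (SpecL α)} (hY : IsClosed Y) :
    ∃ a : α, Y = zV a := by
  obtain ⟨a, ha⟩ := hL.exists_eq_zD_of_isOpen hY.isOpen_compl
  exact ⟨a, compl_injective ha⟩

end IsIdealLattice

theorem isClosed_zV {α : Type*} [CompleteLattice α] [Mul α] (a : α) : IsClosed (zV a) :=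
  ⟨isOpen_generateFrom_of_mem ⟨a, rfl⟩⟩

theorem isSemiprimeElt_sInf {α : Type*} [CompleteLattice α] [Mul α] (Y : Set (SpecL α)) :
    IsSemiprimeElt (sInf (Subtype.val '' Y)) := by
  intro b hb
  refine le_sInf (Set.forall_mem_image.2 fun p hp => ?_)
  exact or_self_iff.1 (p.2.2 b b (hb.trans (sInf_le ⟨p, hp, rfl⟩)))

/-- The assignments `a ↦ V(a)` and `Y ↦ inf Y` are mutually inverse order-reversing
bijections between semi-prime elements of `L` and closed subsets of `Spec L`. -/
theorem semiprime_closed_bijection {α : Type*} [CompleteLattice α] [Mul α]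
    (hL : IsIdealLattice α) :
    (∀ a : α, IsClosed (zV a)) ∧
    (∀ a b : α, IsSemiprimeElt a → IsSemiprimeElt b → a ≤ b → zV b ⊆ zV a) ∧
    (∀ a : α, IsSemiprimeElt a → sInf (Subtype.val '' zV a) = a) ∧
    (∀ Y : Set (SpecL α), IsClosed Y →
      IsSemiprimeElt (sInf (Subtype.val '' Y)) ∧ zV (sInf (Subtype.val '' Y)) = Y) := by
  refine ⟨isClosed_zV, fun a b _ _ hab p hp => hab.trans hp, fun a ha => ?_, fun Y hY => ?_⟩
  · refine le_antisymm ?_ (le_sInf (Set.forall_mem_image.2 fun p hp => hp))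
    by_contra h
    obtain ⟨p, hp, hap, hnp⟩ := hL.exists_isPrimeElt ha h
    exact hnp (sInf_le ⟨⟨p, hp⟩, hap, rfl⟩)
  · refine ⟨isSemiprimeElt_sInf Y, ?_⟩
    obtain ⟨a, rfl⟩ := hL.exists_eq_zV_of_isClosed hY
    exact Set.Subset.antisymm
      (fun p hp => (le_sInf (Set.forall_mem_image.2 fun q hq => hq)).trans hp)
      (fun p hp => sInf_le ⟨p, hp, rfl⟩)
end

section
/- Let L be an ideal lattice. The assignments a ↦ D(a) and Y ↦ sup{b ∈ L : b compact and D(b) ⊆ Y} induce mutually inverse, order-preserving bijections between the set of semi-prime elements of L and the set of open subsets of Spec L. Precisely: for every semi-prime a ∈ L, sup{b compact : D(b) ⊆ D(a)} = a; and for every open subset Y ⊆ Spec L, the element a = sup{b compact : D(b) ⊆ Y} is semi-prime and satisfies D(a) = Y. -/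
open CompleteLattice TopologicalSpace

namespace IsIdealLattice

variable {α : Type*} [CompleteLattice α] [Mul α]

theorem le_of_forall_compact_le (hL : IsIdealLattice α) {a b : α}
    (h : ∀ c, IsCompactElement c → c ≤ a → c ≤ b) : a ≤ b := by
  rw [hL.compactlyGenerated a]
  exact sSup_le fun c hc => h c hc.2 hc.1

/-- A compact element not below a semi-prime `a` is separated from `a` by a prime element. -/
theorem exists_prime_ge_not_le (hL : IsIdealLattice α) {a b : α} (ha : IsSemiprimeElt a)
    (hb : IsCompactElement b) (hba : ¬ b ≤ a) : ∃ p : α, IsPrimeElt p ∧ a ≤ p ∧ ¬ b ≤ p := by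
  let s : ℕ → α := fun n => (fun x => x * x)^[n] b
  have s_succ (n : ℕ) : s (n + 1) = s n * s n := Function.iterate_succ_apply' _ _ _
  have s_compact (n : ℕ) : IsCompactElement (s n) := by
    induction n with
    | zero => exact hb
    | succ n ih => rw [s_succ]; exact hL.compact_mul _ _ ih ih
  have s_not_le (n : ℕ) : ¬ s n ≤ a := by
    induction n with
    | zero => exact hba
    | succ n ih => rw [s_succ]; exact fun h => ih (ha _ h)
  have s_anti : Antitone s :=
    antitone_nat_of_succ_le fun n => (s_succ n).trans_le (hL.mul_le_left _ _)
  obtain ⟨p, hap, hp⟩ := zorn_le_nonempty₀ {x : α | ∀ n, ¬ s n ≤ x} (by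
    intro C hC hchain y hy
    refine ⟨sSup C, fun n hn => ?_, fun z hz => le_sSup hz⟩
    obtain ⟨z, hz, hnz⟩ := (isCompactElement_iff_le_of_directed_sSup_le α (s n)).1 (s_compact n)
      C ⟨y, hy⟩ hchain.directedOn hn
    exact hC hz n hnz) a s_not_le
  have s_le_sup {x : α} (hx : ¬ x ≤ p) : ∃ n, s n ≤ p ⊔ x := by
    by_contra! h
    exact hx (le_sup_right.trans (hp.2 h le_sup_left))
  refine ⟨p, ⟨fun h => hp.1 0 (h ▸ le_top), fun x y hxy => ?_⟩, hap, hp.1 0⟩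
  by_contra! h
  obtain ⟨m, hm⟩ := s_le_sup h.1
  obtain ⟨n, hn⟩ := s_le_sup h.2
  refine hp.1 (max m n + 1) ?_
  calc s (max m n + 1) = s (max m n) * s (max m n) := s_succ _
    _ ≤ (p ⊔ x) * (p ⊔ y) :=
      hL.mul_le_mul ((s_anti (le_max_left m n)).trans hm) ((s_anti (le_max_right m n)).trans hn)
    _ ≤ p := by
      rw [hL.sup_mul, hL.mul_sup x]
      exact sup_le (hL.mul_le_left _ _) (sup_le (hL.mul_le_right _ _) hxy)

theorem zD_mul (hL : IsIdealLattice α) (a b : α) : zD (a * b) = zD a ∩ zD b := by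
  ext p
  refine ⟨fun h => ⟨fun ha => h ((hL.mul_le_left a b).trans ha),
    fun hb => h ((hL.mul_le_right a b).trans hb)⟩, fun h hab => ?_⟩
  exact (p.2.2 a b hab).elim h.1 h.2

end IsIdealLattice

section Zariski

variable {α : Type*} [CompleteLattice α] [Mul α]

theorem zD_mono {a b : α} (h : a ≤ b) : zD a ⊆ zD b :=
  fun _ hp hb => hp (h.trans hb)

theorem zD_sSup (S : Set α) : zD (sSup S) = ⋃ a ∈ S, zD a := by
  ext p
  simp [zD]

theorem isOpen_zD (a : α) : IsOpen (zD a) :=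
  isOpen_generateFrom_of_mem ⟨a, rfl⟩

theorem zD_top : zD (⊤ : α) = Set.univ :=
  Set.eq_univ_of_forall fun p hp => p.2.1 (top_le_iff.1 hp)

theorem IsIdealLattice.exists_eq_zD (hL : IsIdealLattice α) {Y : Set (SpecL α)}
    (hY : IsOpen Y) : ∃ a : α, Y = zD a := by
  induction hY with
  | basic U hU => exact hU
  | univ => exact ⟨⊤, zD_top.symm⟩
  | inter U V _ _ hU hV =>
    obtain ⟨a, rfl⟩ := hU
    obtain ⟨b, rfl⟩ := hV
    exact ⟨a * b, (hL.zD_mul a b).symm⟩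
  | sUnion S _ ih =>
    choose f hf using ih
    refine ⟨sSup {a : α | zD a ∈ S}, ?_⟩
    rw [zD_sSup]
    apply subset_antisymm
    · refine Set.sUnion_subset fun U hU => ?_
      have h := hf U hU
      exact h.trans_subset (Set.subset_biUnion_of_mem (u := zD) (h ▸ hU : zD (f U hU) ∈ S))
    · exact Set.iUnion₂_subset fun a ha => Set.subset_sUnion_of_mem ha

end Zariski

/-- The assignments `a ↦ D(a)` and `Y ↦ sup {b compact : D(b) ⊆ Y}` are mutually inverse
order-preserving bijections between semi-prime elements of `L` and open subsets of
`Spec L`. -/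
theorem semiprime_open_bijection {α : Type*} [CompleteLattice α] [Mul α]
    (hL : IsIdealLattice α) :
    (∀ a : α, IsOpen (zD a)) ∧
    (∀ a b : α, IsSemiprimeElt a → IsSemiprimeElt b → a ≤ b → zD a ⊆ zD b) ∧
    (∀ a : α, IsSemiprimeElt a →
      sSup {b : α | IsCompactElement b ∧ zD b ⊆ zD a} = a) ∧
    (∀ Y : Set (SpecL α), IsOpen Y →
      IsSemiprimeElt (sSup {b : α | IsCompactElement b ∧ zD b ⊆ Y}) ∧
      zD (sSup {b : α | IsCompactElement b ∧ zD b ⊆ Y}) = Y) := by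
  refine ⟨isOpen_zD, fun a b _ _ h => zD_mono h, fun a ha => ?_, fun Y hY => ?_⟩
  · refine le_antisymm (sSup_le fun b hb => ?_) (hL.le_of_forall_compact_le fun c hc hca =>
      le_sSup ⟨hc, zD_mono hca⟩)
    by_contra hba
    obtain ⟨p, hp, hap, hbp⟩ := hL.exists_prime_ge_not_le ha hb.1 hba
    exact hb.2 (show (⟨p, hp⟩ : SpecL α) ∈ zD b from hbp) hap
  · obtain ⟨a, rfl⟩ := hL.exists_eq_zD hY
    have hD : zD (sSup {b : α | IsCompactElement b ∧ zD b ⊆ zD a}) = zD a := by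
      apply subset_antisymm
      · rw [zD_sSup]
        exact Set.iUnion₂_subset fun b hb => hb.2
      · exact zD_mono (hL.le_of_forall_compact_le fun c hc hca => le_sSup ⟨hc, zD_mono hca⟩)
    refine ⟨fun x hx => hL.le_of_forall_compact_le fun c hc hcx => le_sSup ⟨hc, ?_⟩, hD⟩
    have hxD := zD_mono hx
    rw [hL.zD_mul, Set.inter_self, hD] at hxD
    exact (zD_mono hcx).trans hxD
end

section
/- Let X be a spectral space and let L = L_open(X) be the ideal lattice of open subsets of X with multiplication UV = U ∩ V. Then the map X → Spec L sending x to the open set X \ closure({x}) is a homeomorphism from X onto the prime spectrum Spec L with its Zariski topology. -/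
open CompleteLattice TopologicalSpace

/-- A spectral space: T0 and quasi-compact, the quasi-compact open subsets are closed
under finite intersections and form a basis of the topology, and every non-empty
irreducible closed subset has a generic point. -/
structure IsSpectralSpace (X : Type*) [TopologicalSpace X] : Prop where
  t0 : T0Space X
  compact : CompactSpace X
  inter : ∀ U V : Set X, IsOpen U → IsCompact U → IsOpen V → IsCompact V →
    IsCompact (U ∩ V)
  basis : TopologicalSpace.IsTopologicalBasis {U : Set X | IsOpen U ∧ IsCompact U}
  sober : QuasiSober X

/-- The lattice of open subsets with multiplication given by intersection. -/
instance (X : Type*) [TopologicalSpace X] : Mul (Opens X) := ⟨fun U V => U ⊓ V⟩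

theorem le_compl_closure_singleton_iff {X : Type*} [TopologicalSpace X] (U : Opens X) (x : X) :
    U ≤ (⟨(closure {x})ᶜ, isClosed_closure.isOpen_compl⟩ : Opens X) ↔ x ∉ U := by
  change (U : Set X) ⊆ (closure {x})ᶜ ↔ _
  rw [Set.subset_compl_comm, U.isOpen.isClosed_compl.closure_subset_iff,
    Set.singleton_subset_iff, Set.mem_compl_iff, SetLike.mem_coe]

theorem isPrimeElt_compl_closure_singleton {X : Type*} [TopologicalSpace X] (x : X) :
    IsPrimeElt (⟨(closure {x})ᶜ, isClosed_closure.isOpen_compl⟩ : Opens X) := by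
  refine ⟨fun h => ?_, fun U V h => ?_⟩
  · exact (le_compl_closure_singleton_iff ⊤ x).1 h.ge trivial
  · rw [le_compl_closure_singleton_iff] at h ⊢
    rw [le_compl_closure_singleton_iff]
    by_contra! hUV
    exact h hUV

/-- The point of the prime spectrum of the open set lattice given by the complement of
the closure of a point. -/
def pointToSpecL {X : Type*} [TopologicalSpace X] (x : X) : SpecL (Opens X) :=
  ⟨⟨(closure {x})ᶜ, isClosed_closure.isOpen_compl⟩, isPrimeElt_compl_closure_singleton x⟩

theorem preimage_pointToSpecL_zD {X : Type*} [TopologicalSpace X] (U : Opens X) :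
    pointToSpecL ⁻¹' zD U = (U : Set X) := by
  ext x
  exact (le_compl_closure_singleton_iff U x).not_left

theorem isInducing_pointToSpecL {X : Type*} [TopologicalSpace X] :
    Topology.IsInducing (pointToSpecL : X → SpecL (Opens X)) := by
  refine ⟨le_antisymm ?_ fun U hU => ?_⟩
  · rw [← continuous_iff_le_induced]
    refine continuous_generateFrom_iff.2 ?_
    rintro _ ⟨U, rfl⟩
    rw [preimage_pointToSpecL_zD]
    exact U.isOpen
  · exact ⟨zD ⟨U, hU⟩, isOpen_generateFrom_of_mem ⟨_, rfl⟩, preimage_pointToSpecL_zD ⟨U, hU⟩⟩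

theorem IsPrimeElt.isIrreducible_compl {X : Type*} [TopologicalSpace X] {P : Opens X}
    (hP : IsPrimeElt P) : IsIrreducible (P : Set X)ᶜ := by
  constructor
  · rw [Set.nonempty_compl]
    exact fun h => hP.1 (Opens.ext h)
  · rintro U V hU hV ⟨x, hxP, hxU⟩ ⟨y, hyP, hyV⟩
    by_contra hUV
    have hle : (⟨U, hU⟩ : Opens X) * ⟨V, hV⟩ ≤ P := by
      intro z hz
      by_contra hzP
      exact hUV ⟨z, hzP, hz⟩
    rcases hP.2 _ _ hle with h | h
    · exact hxP (h hxU)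
    · exact hyP (h hyV)

theorem surjective_pointToSpecL {X : Type*} [TopologicalSpace X] [QuasiSober X] :
    Function.Surjective (pointToSpecL : X → SpecL (Opens X)) := by
  rintro ⟨P, hP⟩
  obtain ⟨x, hx⟩ := QuasiSober.sober hP.isIrreducible_compl P.isOpen.isClosed_compl
  refine ⟨x, Subtype.ext (Opens.ext ?_)⟩
  change (closure {x})ᶜ = (P : Set X)
  rw [hx.def, compl_compl]

/-- For a spectral space `X`, the map `x ↦ X \ closure {x}` is a homeomorphism from `X`
onto the prime spectrum of the ideal lattice of open subsets of `X` (with its Zariski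
topology). -/
theorem spectral_homeo_specL_opens {X : Type*} [TopologicalSpace X]
    (hX : IsSpectralSpace X) :
    ∃ e : X ≃ₜ SpecL (Opens X),
      ∀ x : X, ((e x).1 : Opens X) =
        ⟨(closure {x})ᶜ, isClosed_closure.isOpen_compl⟩ := by
  have := hX.t0
  have := hX.sober
  have hind := isInducing_pointToSpecL (X := X)
  let e := Equiv.ofBijective pointToSpecL ⟨hind.injective, surjective_pointToSpecL (X := X)⟩
  exact ⟨e.toHomeomorphOfIsInducing hind, fun _ => rfl⟩
end

section
/- Let L be an ideal lattice and let (X, δ) be a spectrum of L, i.e., X is a topological space and δ assigns to each a ∈ L an open subset δ(a) ⊆ X such that δ(sup A) = ⋃_{a ∈ A} δ(a) for every A ⊆ L, δ(1) = X, and δ(ab) = δ(a) ∩ δ(b) for all a, b ∈ L. Then there exists a unique continuous map f : X → Spec L such that δ(a) = f⁻¹(D(a)) for every a ∈ L; this map is given by f(x) = sup{c ∈ L : c compact and x ∉ δ(c)}. -/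
open CompleteLattice TopologicalSpace

/-- A map sending arbitrary suprema to unions is monotone. -/
theorem monotone_of_map_sSup {α X : Type*} [CompleteLattice α] {δ : α → Set X}
    (hsup : ∀ A : Set α, δ (sSup A) = ⋃ a ∈ A, δ a) : Monotone δ := by
  intro a b hab
  have h := hsup {a, b}
  rw [sSup_pair, sup_eq_right.mpr hab] at h
  rw [h]
  exact Set.subset_biUnion_of_mem (u := δ) (Set.mem_insert a {b})

/-- The element `sup {c compact : x ∉ δ(c)}` is the largest `a` with `x ∉ δ(a)`. -/
theorem le_sSup_compact_notMem_iff {α X : Type*} [CompleteLattice α] [Mul α]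
    (hL : IsIdealLattice α) {δ : α → Set X}
    (hsup : ∀ A : Set α, δ (sSup A) = ⋃ a ∈ A, δ a) (x : X) (a : α) :
    a ≤ sSup {c : α | IsCompactElement c ∧ x ∉ δ c} ↔ x ∉ δ a := by
  constructor
  · intro h hx
    have hx' := monotone_of_map_sSup hsup h hx
    rw [hsup] at hx'
    simp only [Set.mem_iUnion] at hx'
    obtain ⟨c, hc, hxc⟩ := hx'
    exact hc.2 hxc
  · intro hx
    rw [hL.compactlyGenerated a]
    exact sSup_le_sSup fun b hb => ⟨hb.2, fun hxb => hx (monotone_of_map_sSup hsup hb.1 hxb)⟩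

/-- The element `sup {c compact : x ∉ δ(c)}` is prime. -/
theorem isPrimeElt_sSup_compact_notMem {α X : Type*} [CompleteLattice α] [Mul α]
    (hL : IsIdealLattice α) {δ : α → Set X}
    (hsup : ∀ A : Set α, δ (sSup A) = ⋃ a ∈ A, δ a)
    (htop : δ ⊤ = Set.univ)
    (hmul : ∀ a b : α, δ (a * b) = δ a ∩ δ b) (x : X) :
    IsPrimeElt (sSup {c : α | IsCompactElement c ∧ x ∉ δ c}) := by
  refine ⟨fun h => ?_, fun a b h => ?_⟩
  · exact (le_sSup_compact_notMem_iff hL hsup x ⊤).mp h.ge (htop ▸ Set.mem_univ x)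
  · simp only [le_sSup_compact_notMem_iff hL hsup, hmul] at h ⊢
    exact not_and_or.mp h

/-- Universal property of `(Spec L, D)`: for every spectrum `(X, δ)` of `L` there is a
unique continuous map `f : X → Spec L` with `δ(a) = f⁻¹(D(a))` for all `a`, and this
map is given by `f(x) = sup {c compact : x ∉ δ(c)}`. -/
theorem spectrum_universal_property {α : Type*} [CompleteLattice α] [Mul α]
    {X : Type*} [TopologicalSpace X] (hL : IsIdealLattice α)
    (δ : α → Set X) (hopen : ∀ a : α, IsOpen (δ a))
    (hsup : ∀ A : Set α, δ (sSup A) = ⋃ a ∈ A, δ a)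
    (htop : δ ⊤ = Set.univ)
    (hmul : ∀ a b : α, δ (a * b) = δ a ∩ δ b) :
    (∃! f : X → SpecL α, Continuous f ∧ ∀ a : α, δ a = f ⁻¹' zD a) ∧
    (∀ f : X → SpecL α, Continuous f → (∀ a : α, δ a = f ⁻¹' zD a) →
      ∀ x : X, (f x).1 = sSup {c : α | IsCompactElement c ∧ x ∉ δ c}) := by
  have formula : ∀ f : X → SpecL α, (∀ a : α, δ a = f ⁻¹' zD a) →
      ∀ x : X, (f x).1 = sSup {c : α | IsCompactElement c ∧ x ∉ δ c} := by
    intro f hf x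
    refine eq_of_forall_le_iff fun a => ?_
    rw [le_sSup_compact_notMem_iff hL hsup, hf a]
    exact not_not.symm
  refine ⟨?_, fun f _ hf => formula f hf⟩
  let g : X → SpecL α := fun x => ⟨_, isPrimeElt_sSup_compact_notMem hL hsup htop hmul x⟩
  have hg : ∀ a : α, δ a = g ⁻¹' zD a := fun a => Set.ext fun x =>
    not_not.symm.trans (not_congr (le_sSup_compact_notMem_iff hL hsup x a)).symm
  refine ⟨g, ⟨continuous_generateFrom_iff.mpr ?_, hg⟩, fun f hf => ?_⟩
  · rintro _ ⟨a, rfl⟩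
    exact hg a ▸ hopen a
  · exact funext fun x => Subtype.ext (formula f hf.2 x)
end

section
/- Let φ : L → L' be a morphism of ideal lattices. Then there is a unique continuous map Spec φ : Spec L' → Spec L such that D(φ(a)) = (Spec φ)⁻¹(D(a)) for all a ∈ L; explicitly, (Spec φ)(p) = sup{a ∈ L : φ(a) ≤ p} for p ∈ Spec L'. -/
open CompleteLattice TopologicalSpace

/-- A morphism of ideal lattices: preserves arbitrary suprema, the top element and the
multiplication. -/
def IsIdealLatticeHom {α β : Type*} [CompleteLattice α] [Mul α]
    [CompleteLattice β] [Mul β] (φ : α → β) : Prop :=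
  (∀ A : Set α, φ (sSup A) = sSup (φ '' A)) ∧ φ ⊤ = ⊤ ∧ ∀ a b : α, φ (a * b) = φ a * φ b

/-- A morphism of ideal lattices is left adjoint to `p ↦ sSup {a | φ a ≤ p}`. -/
theorem IsIdealLatticeHom.galoisConnection {α β : Type*} [CompleteLattice α] [Mul α]
    [CompleteLattice β] [Mul β] {φ : α → β} (hφ : IsIdealLatticeHom φ) :
    GaloisConnection φ fun p => sSup {a : α | φ a ≤ p} := by
  have hmono : Monotone φ := by
    intro a b hab
    have h := hφ.1 {a, b}
    rw [sSup_pair, sup_eq_right.2 hab, Set.image_pair, sSup_pair] at h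
    exact h ▸ le_sup_left
  refine fun a p => ⟨fun h => le_sSup h, fun h => (hmono h).trans ?_⟩
  rw [hφ.1]
  exact sSup_le (by rintro _ ⟨b, hb, rfl⟩; exact hb)

theorem IsIdealLatticeHom.isPrimeElt_sSup {α β : Type*} [CompleteLattice α] [Mul α]
    [CompleteLattice β] [Mul β] {φ : α → β} (hφ : IsIdealLatticeHom φ) {p : β}
    (hp : IsPrimeElt p) : IsPrimeElt (sSup {a : α | φ a ≤ p}) := by
  have gc := hφ.galoisConnection
  refine ⟨fun h => hp.1 (top_le_iff.1 ?_), fun a b hab => ?_⟩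
  · exact hφ.2.1 ▸ (gc ⊤ p).2 h.ge
  · have hmul : φ a * φ b ≤ p := hφ.2.2 a b ▸ (gc _ p).2 hab
    exact (hp.2 _ _ hmul).imp (gc a p).1 (gc b p).1

/-- The preimage condition on basic open sets determines the values of a map of spectra. -/
theorem val_eq_sSup_of_zD_eq_preimage {α β : Type*} [CompleteLattice α] [Mul α]
    [CompleteLattice β] [Mul β] {φ : α → β} {g : SpecL β → SpecL α}
    (hg : ∀ a : α, zD (φ a) = g ⁻¹' zD a) (p : SpecL β) :
    (g p).1 = sSup {a : α | φ a ≤ p.1} := by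
  have key : ∀ a, φ a ≤ p.1 ↔ a ≤ (g p).1 := fun a =>
    not_iff_not.1 (Set.ext_iff.1 (hg a) p)
  simp only [key]
  exact isLUB_Iic.sSup_eq.symm

theorem continuous_of_zD_eq_preimage {α β : Type*} [CompleteLattice α] [Mul α]
    [CompleteLattice β] [Mul β] {φ : α → β} {g : SpecL β → SpecL α}
    (hg : ∀ a : α, zD (φ a) = g ⁻¹' zD a) : Continuous g := by
  refine continuous_generateFrom_iff.2 ?_
  rintro _ ⟨a, rfl⟩
  exact isOpen_generateFrom_of_mem ⟨φ a, (hg a).symm⟩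

/-- A morphism `φ : L → L'` of ideal lattices induces a unique continuous map
`Spec φ : Spec L' → Spec L` with `D(φ(a)) = (Spec φ)⁻¹(D(a))` for all `a ∈ L`;
explicitly `(Spec φ)(p) = sup {a : φ(a) ≤ p}`. -/
theorem spec_functorial {α β : Type*} [CompleteLattice α] [Mul α]
    [CompleteLattice β] [Mul β] (hL : IsIdealLattice α) (hL' : IsIdealLattice β)
    (φ : α → β) (hφ : IsIdealLatticeHom φ) :
    (∃! g : SpecL β → SpecL α, Continuous g ∧ ∀ a : α, zD (φ a) = g ⁻¹' zD a) ∧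
    (∀ g : SpecL β → SpecL α, Continuous g → (∀ a : α, zD (φ a) = g ⁻¹' zD a) →
      ∀ p : SpecL β, (g p).1 = sSup {a : α | φ a ≤ p.1}) := by
  refine ⟨?_, fun g _ hg => val_eq_sSup_of_zD_eq_preimage hg⟩
  have hg : ∀ a : α, zD (φ a) =
      (fun p : SpecL β => (⟨_, hφ.isPrimeElt_sSup p.2⟩ : SpecL α)) ⁻¹' zD a := fun a =>
    Set.ext fun p => not_congr (hφ.galoisConnection a p.1)
  exact ⟨_, ⟨continuous_of_zD_eq_preimage hg, hg⟩, fun g' hg' => funext fun p =>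
    Subtype.ext (val_eq_sSup_of_zD_eq_preimage hg'.2 p)⟩
end
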